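/- Let μ be a finite positive Borel measure on [0,1) which is a 1-logarithmic 1-Carleson measure. Then there exists a constant C > 0 such that for every f in the Hardy space H^1: (a) for every z in the unit disc 𝔻 the integral I_μ f(z) = ∫_{[0,1)} f(t)/(1 - t z) dμ(t) converges absolutely, the resulting function I_μ f is analytic in 𝔻, and (b) I_μ f belongs to the Dirichlet-type space 𝒟^1_0 with ‖I_μ f‖_{𝒟^1_0} ≤ C ‖f‖_{H^1}. -/

import Mathlib

open MeasureTheory Set Metric Filter Asymptotics
open scoped ENNReal

/-- Normalized area measure on `ℂ`: Lebesgue area divided by `π`,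
so that the unit disc has total mass `1`. -/
noncomputable def dA : Measure ℂ := (ENNReal.ofReal Real.pi)⁻¹ • volume

/-- The (weighted) Bergman norm `‖f‖_{A^p_α} = ((α+1) ∫_𝔻 (1-|z|²)^α |f(z)|^p dA)^{1/p}`,
as an extended real number. -/
noncomputable def bergmanNorm (p α : ℝ) (f : ℂ → ℂ) : ℝ≥0∞ :=
  (ENNReal.ofReal (α + 1) *
    ∫⁻ z in ball (0 : ℂ) 1, ENNReal.ofReal ((1 - ‖z‖ ^ 2) ^ α * ‖f z‖ ^ p) ∂dA) ^ (1 / p)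

/-- The Dirichlet-type norm `‖f‖_{𝒟^p_α} = |f(0)| + ‖f′‖_{A^p_α}`. -/
noncomputable def dirichletNorm (p α : ℝ) (f : ℂ → ℂ) : ℝ≥0∞ :=
  ENNReal.ofReal ‖f 0‖ + bergmanNorm p α (deriv f)

/-- The Hardy `H^1` norm `sup_{0 ≤ r < 1} (2π)⁻¹ ∫_0^{2π} |f(re^{iθ})| dθ`. -/
noncomputable def hardyNorm (f : ℂ → ℂ) : ℝ≥0∞ :=
  ⨆ r ∈ Ico (0 : ℝ) 1,
    (ENNReal.ofReal (2 * Real.pi))⁻¹ *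
      ∫⁻ θ in Ioc (0 : ℝ) (2 * Real.pi),
        ENNReal.ofReal ‖f ((r : ℂ) * Complex.exp ((θ : ℂ) * Complex.I))‖

/-- The operator `I_μ f(z) = ∫_{[0,1)} f(t)/(1-tz) dμ(t)`. -/
noncomputable def Imu (μ : Measure ℝ) (f : ℂ → ℂ) (z : ℂ) : ℂ :=
  ∫ t : ℝ, f (t : ℂ) / (1 - (t : ℂ) * z) ∂μ

/-- The moment of order `n` of `μ`. -/
noncomputable def moment (μ : Measure ℝ) (n : ℕ) : ℝ := ∫ t : ℝ, t ^ n ∂μ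

/-- `M_∞(r, f) = sup_{|z| = r} |f(z)|`. -/
noncomputable def Minf (f : ℂ → ℂ) (r : ℝ) : ℝ := ⨆ z ∈ sphere (0 : ℂ) r, ‖f z‖

/-!
Multiplying `μ` by the weight `log (2 / (1 - t))` gives a measure `ν` on `[0, 1)` which is still
an ordinary Carleson measure. Cauchy's formula for `f(z) (1 - z) / (1 - t z)` bounds `|f(t)|` by
the average of `|f(ζ)| |1 - ζ| / |1 - t ζ|²` over the unit circle, and the integral of this kernel
in `dν(t)` is bounded uniformly in `ζ`; hence `∫ |f| dν ≲ ‖f‖_{H¹}`. Differentiating `I_μ f` under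
the integral sign and integrating over `𝔻` produces `∫ |f(t)| ∫_𝔻 |1 - t z|⁻² dA(z) dμ(t)`, where
the inner integral is `≲ log (2 / (1 - t))`, that is, exactly the weight that `ν` carries.
-/

theorem setLIntegral_ofReal_deriv_eq_sub {F F' : ℝ → ℝ} {a b : ℝ} (hab : a ≤ b)
    (hF : ∀ x ∈ Icc a b, HasDerivAt F (F' x) x) (hF' : ∀ x ∈ Icc a b, 0 ≤ F' x) :
    ∫⁻ x in Ico a b, ENNReal.ofReal (F' x) = ENNReal.ofReal (F b - F a) := by
  have hcont : ContinuousOn F (Icc a b) := HasDerivAt.continuousOn hF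
  have hderiv : ∀ x ∈ Ioo a b, HasDerivAt F (F' x) x := fun x hx ↦ hF x (Ioo_subset_Icc_self hx)
  have hint : IntegrableOn F' (Ioc a b) :=
    intervalIntegral.integrableOn_deriv_of_nonneg hcont hderiv
      fun x hx ↦ hF' x (Ioo_subset_Icc_self hx)
  have hnonneg : 0 ≤ᵐ[volume.restrict (Ioc a b)] F' :=
    ae_restrict_of_forall_mem measurableSet_Ioc fun x hx ↦ hF' x (Ioc_subset_Icc_self hx)
  rw [setLIntegral_congr Ico_ae_eq_Ioc, ← ofReal_integral_eq_lintegral_ofReal hint hnonneg,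
    ← intervalIntegral.integral_of_le hab,
    intervalIntegral.integral_eq_sub_of_hasDerivAt_of_le hab hcont hderiv
      ((intervalIntegrable_iff_integrableOn_Ioc_of_le hab).2 hint)]

theorem setLIntegral_Ioi_exp_neg (c : ℝ) :
    ∫⁻ x in Ioi c, ENNReal.ofReal (Real.exp (-x)) = ENNReal.ofReal (Real.exp (-c)) := by
  rw [← ofReal_integral_eq_lintegral_ofReal (integrableOn_exp_neg_Ioi c)
    (ae_of_all _ fun x ↦ (Real.exp_pos _).le), integral_exp_neg_Ioi]

/-- `ν` is a Carleson measure on the radius `[0, 1)`, with constant `C`. -/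
def IsRadialCarleson (ν : Measure ℝ) (C : ℝ≥0∞) : Prop :=
  ∀ t ∈ Ico (0 : ℝ) 1, ν (Ico t 1) ≤ C * ENNReal.ofReal (1 - t)

/-- The logarithmic weight `log (2 / (1 - t))` of a point `t` of the radius `[0, 1)`. -/
noncomputable def logWeight (t : ℝ) : ℝ := Real.log (2 / (1 - t))

/-- The measure `log (2 / (1 - t)) dμ(t)`. -/
noncomputable abbrev logWeighted (μ : Measure ℝ) : Measure ℝ :=
  μ.withDensity fun t ↦ ENNReal.ofReal (logWeight t)

/-- `μ` is a `1`-logarithmic `1`-Carleson measure on the radius `[0, 1)`, with constant `C`.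
The inequality is one between extended reals, so it entails that `μ` is finite on `[0, 1)`
when `C < ∞`. -/
def IsRadialLogCarleson (μ : Measure ℝ) (C : ℝ≥0∞) : Prop :=
  ∀ t ∈ Ico (0 : ℝ) 1, μ (Ico t 1) * ENNReal.ofReal (logWeight t) ≤ C * ENNReal.ofReal (1 - t)

@[fun_prop]
theorem measurable_logWeight : Measurable logWeight := by
  unfold logWeight
  fun_prop

theorem lintegral_logWeighted (μ : Measure ℝ) (φ : ℝ → ℝ≥0∞) :
    ∫⁻ t, φ t ∂logWeighted μ = ∫⁻ t, ENNReal.ofReal (logWeight t) * φ t ∂μ :=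
  lintegral_withDensity_eq_lintegral_mul_non_measurable μ (by fun_prop)
    (ae_of_all _ fun _ ↦ ENNReal.ofReal_lt_top) φ

theorem half_le_logWeight {t : ℝ} (ht : t ∈ Ico (0 : ℝ) 1) : 1 / 2 ≤ logWeight t := by
  have hlog : Real.log 2 ≤ logWeight t := by
    refine Real.log_le_log two_pos ?_
    rw [le_div_iff₀ (sub_pos.2 ht.2)]
    linarith [ht.1]
  linarith [Real.log_two_gt_d9]

theorem logWeight_one_sub_two_mul_exp_neg (x : ℝ) : logWeight (1 - 2 * Real.exp (-x)) = x := by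
  rw [logWeight, sub_sub_cancel, Real.exp_neg, ← div_eq_mul_inv,
    div_div_cancel₀ two_ne_zero, Real.log_exp]

theorem two_mul_exp_neg_logWeight {t : ℝ} (ht : t < 1) :
    2 * Real.exp (-logWeight t) = 1 - t := by
  rw [logWeight, Real.exp_neg, Real.exp_log (div_pos two_pos (sub_pos.2 ht)), inv_div,
    mul_div_cancel₀ _ two_ne_zero]

theorem one_sub_two_mul_exp_neg_lt_of_lt_logWeight {s x : ℝ} (hs : s < 1) (h : x < logWeight s) :
    1 - 2 * Real.exp (-x) < s := by
  have := Real.exp_lt_exp.2 (neg_lt_neg h)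
  linarith [two_mul_exp_neg_logWeight hs]

theorem IsRadialLogCarleson.measure_Ico_one_sub_two_mul_exp_neg_le {μ : Measure ℝ} {C : ℝ≥0∞}
    (hμ : IsRadialLogCarleson μ C) {x : ℝ} (hx : 1 / 2 ≤ x)
    (hmem : 1 - 2 * Real.exp (-x) ∈ Ico (0 : ℝ) 1) :
    μ (Ico (1 - 2 * Real.exp (-x)) 1) ≤ 4 * C * ENNReal.ofReal (Real.exp (-x)) := by
  set m := μ (Ico (1 - 2 * Real.exp (-x)) 1)
  have hweight : m * ENNReal.ofReal x ≤ C * ENNReal.ofReal (2 * Real.exp (-x)) := by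
    simpa only [logWeight_one_sub_two_mul_exp_neg, sub_sub_cancel] using hμ _ hmem
  calc m ≤ ENNReal.ofReal (2 * x) * m :=
        le_mul_of_one_le_left' (ENNReal.one_le_ofReal.2 (by linarith))
    _ = 2 * (m * ENNReal.ofReal x) := by
        rw [ENNReal.ofReal_mul zero_le_two, ENNReal.ofReal_ofNat]; ring
    _ ≤ 2 * (C * ENNReal.ofReal (2 * Real.exp (-x))) := by gcongr
    _ = 4 * C * ENNReal.ofReal (Real.exp (-x)) := by
        rw [ENNReal.ofReal_mul zero_le_two, ENNReal.ofReal_ofNat]; ring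

theorem IsRadialLogCarleson.restrict_setOf_lt_logWeight_le {μ : Measure ℝ} {C : ℝ≥0∞}
    (hμ : IsRadialLogCarleson μ C) {t x : ℝ} (ht : t ∈ Ico (0 : ℝ) 1) (hx : logWeight t < x) :
    μ.restrict (Ico t 1) {s | x < logWeight s} ≤ 4 * C * ENNReal.ofReal (Real.exp (-x)) := by
  have hmem : 1 - 2 * Real.exp (-x) ∈ Ico (0 : ℝ) 1 := by
    have := Real.exp_le_exp.2 (neg_le_neg hx.le)
    have := two_mul_exp_neg_logWeight ht.2
    constructor <;> linarith [ht.1, Real.exp_pos (-x)]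
  refine le_trans ?_
    (hμ.measure_Ico_one_sub_two_mul_exp_neg_le ((half_le_logWeight ht).trans hx.le) hmem)
  rw [Measure.restrict_apply' measurableSet_Ico]
  exact measure_mono fun s hs ↦
    ⟨(one_sub_two_mul_exp_neg_lt_of_lt_logWeight hs.2.2 hs.1).le, hs.2.2⟩

theorem IsRadialLogCarleson.isRadialCarleson_logWeighted {μ : Measure ℝ} {C : ℝ≥0∞}
    (hμ : IsRadialLogCarleson μ C) :
    IsRadialCarleson (logWeighted μ) (3 * C) := by
  intro t ht
  set w := logWeight t
  have hw : 1 / 2 ≤ w := half_le_logWeight ht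
  set ρ := μ.restrict (Ico t 1)
  have hsmall (x : ℝ) : ρ {s | x < logWeight s} ≤ μ (Ico t 1) :=
    (measure_mono (subset_univ _)).trans_eq (Measure.restrict_apply_univ _)
  calc logWeighted μ (Ico t 1)
      = ∫⁻ s, ENNReal.ofReal (logWeight s) ∂ρ := withDensity_apply _ measurableSet_Ico
    _ = ∫⁻ x in Ioi 0, ρ {s | x < logWeight s} := by
        refine lintegral_eq_lintegral_meas_lt ρ ?_ measurable_logWeight.aemeasurable
        refine ae_restrict_of_forall_mem measurableSet_Ico fun s hs ↦ ?_
        exact one_half_pos.le.trans (half_le_logWeight ⟨ht.1.trans hs.1, hs.2⟩)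
    -- Levels `x ≤ w` are bounded by the total mass of `[t, 1)`; for `x > w` the superlevel set
    -- lies in `[1 - 2 * exp (-x), 1)`, whose mass decays like `exp (-x)`.
    _ = (∫⁻ x in Ioc 0 w, ρ {s | x < logWeight s}) + ∫⁻ x in Ioi w, ρ {s | x < logWeight s} := by
        rw [← Ioc_union_Ioi_eq_Ioi (by linarith : 0 ≤ w),
          lintegral_union measurableSet_Ioi Ioc_disjoint_Ioi_same]
    _ ≤ (∫⁻ _ in Ioc 0 w, μ (Ico t 1)) +
          ∫⁻ x in Ioi w, 4 * C * ENNReal.ofReal (Real.exp (-x)) :=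
        add_le_add (lintegral_mono hsmall)
          (setLIntegral_mono' measurableSet_Ioi fun x ↦ hμ.restrict_setOf_lt_logWeight_le ht)
    _ = μ (Ico t 1) * ENNReal.ofReal w + 4 * C * ENNReal.ofReal (Real.exp (-w)) := by
        rw [setLIntegral_const, Real.volume_Ioc, sub_zero, lintegral_const_mul _ (by fun_prop),
          setLIntegral_Ioi_exp_neg]
    _ ≤ C * ENNReal.ofReal (1 - t) + 2 * C * ENNReal.ofReal (1 - t) := by
        refine add_le_add (hμ t ht) (le_of_eq ?_)
        rw [← two_mul_exp_neg_logWeight ht.2, ENNReal.ofReal_mul zero_le_two, ENNReal.ofReal_ofNat]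
        ring
    _ = 3 * C * ENNReal.ofReal (1 - t) := by ring

theorem IsRadialCarleson.measure_le_of_forall_mem {ν : Measure ℝ} {C : ℝ≥0∞}
    (hν : IsRadialCarleson ν C) {S : Set ℝ} (hS : S ⊆ Ico 0 1)
    (hup : ∀ a ∈ S, Ico a 1 ⊆ S) : ν S ≤ C * volume S := by
  rcases S.eq_empty_or_nonempty with rfl | hne
  · simp
  have hbdd : BddBelow S := ⟨0, fun x hx ↦ (hS hx).1⟩
  have hinf : sInf S ∈ Ico (0 : ℝ) 1 := by
    obtain ⟨x, hx⟩ := hne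
    exact ⟨Real.sInf_nonneg fun y hy ↦ (hS hy).1, (csInf_le hbdd hx).trans_lt (hS hx).2⟩
  have hsub : Ioo (sInf S) 1 ⊆ S := fun x hx ↦ by
    obtain ⟨a, ha, hax⟩ := exists_lt_of_csInf_lt hne hx.1
    exact hup a ha ⟨hax.le, hx.2⟩
  calc ν S ≤ ν (Ico (sInf S) 1) := measure_mono fun x hx ↦ ⟨csInf_le hbdd hx, (hS hx).2⟩
    _ ≤ C * volume (Ioo (sInf S) 1) := by simpa only [Real.volume_Ioo] using hν _ hinf
    _ ≤ C * volume S := by gcongr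

theorem IsRadialCarleson.setLIntegral_le_of_monotoneOn {ν : Measure ℝ} {C : ℝ≥0∞}
    (hν : IsRadialCarleson ν C) {φ : ℝ → ℝ} (hφ : MonotoneOn φ (Ico 0 1))
    (hφ₀ : ∀ t ∈ Ico (0 : ℝ) 1, 0 ≤ φ t) :
    ∫⁻ t in Ico 0 1, ENNReal.ofReal (φ t) ∂ν ≤ C * ∫⁻ t in Ico 0 1, ENNReal.ofReal (φ t) := by
  have layercake (ρ : Measure ℝ) : ∫⁻ t in Ico 0 1, ENNReal.ofReal (φ t) ∂ρ =
      ∫⁻ x in Ioi 0, ρ ({t | x < φ t} ∩ Ico 0 1) := by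
    rw [lintegral_eq_lintegral_meas_lt _ (ae_restrict_of_forall_mem measurableSet_Ico hφ₀)
      (aemeasurable_restrict_of_monotoneOn measurableSet_Ico hφ)]
    simp only [Measure.restrict_apply' measurableSet_Ico]
  have hlevel (x : ℝ) :
      ν ({t | x < φ t} ∩ Ico 0 1) ≤ C * volume ({t | x < φ t} ∩ Ico 0 1) := by
    refine hν.measure_le_of_forall_mem inter_subset_right fun a ha b hb ↦ ?_
    have hb' : b ∈ Ico (0 : ℝ) 1 := ⟨ha.2.1.trans hb.1, hb.2⟩
    exact ⟨lt_of_lt_of_le ha.1 (hφ ha.2 hb' hb.1), hb'⟩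
  have hanti : Antitone fun x ↦ volume ({t | x < φ t} ∩ Ico 0 1) := fun x y hxy ↦
    measure_mono <| inter_subset_inter_left _ fun t ht ↦ lt_of_le_of_lt hxy ht
  rw [layercake, layercake, ← lintegral_const_mul _ hanti.measurable]
  exact lintegral_mono hlevel

theorem one_sub_add_norm_one_sub_le {t : ℝ} (ht : t ∈ Icc (0 : ℝ) 1) {z : ℂ} (hz : ‖z‖ ≤ 1) :
    (1 - t) + ‖1 - z‖ ≤ 3 * ‖1 - t * z‖ := by
  have hscale {a : ℝ} (ha : 0 ≤ a) : ‖(a : ℂ) * z‖ ≤ a := by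
    rw [norm_mul, Complex.norm_of_nonneg ha]
    exact mul_le_of_le_one_right ha hz
  have hfar : 1 - t ≤ ‖1 - t * z‖ := by
    have := norm_sub_norm_le (1 : ℂ) (t * z)
    rw [norm_one] at this
    linarith [hscale ht.1]
  have hnear : ‖1 - z‖ ≤ ‖1 - t * z‖ + (1 - t) :=
    calc ‖1 - z‖ = ‖(1 - t * z) - (1 - t : ℝ) * z‖ := by push_cast; ring_nf
      _ ≤ ‖1 - t * z‖ + ‖((1 - t : ℝ) : ℂ) * z‖ := norm_sub_le _ _
      _ ≤ ‖1 - t * z‖ + (1 - t) := by gcongr; exact hscale (sub_nonneg.2 ht.2)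
  linarith

theorem norm_one_sub_mul_pos {t : ℝ} (ht : t ∈ Ico (0 : ℝ) 1) {z : ℂ} (hz : ‖z‖ ≤ 1) :
    0 < ‖1 - t * z‖ := by
  linarith [one_sub_add_norm_one_sub_le ⟨ht.1, ht.2.le⟩ hz, norm_nonneg (1 - z), ht.2]

theorem one_div_norm_one_sub_mul_sq_le {t : ℝ} (ht : t ∈ Ico (0 : ℝ) 1) {z : ℂ} (hz : ‖z‖ ≤ 1) :
    1 / ‖1 - t * z‖ ^ 2 ≤ 9 / ((1 - t) + ‖1 - z‖) ^ 2 := by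
  have hpos : 0 < (1 - t) + ‖1 - z‖ := add_pos_of_pos_of_nonneg (sub_pos.2 ht.2) (norm_nonneg _)
  rw [div_le_div_iff₀ (pow_pos (norm_one_sub_mul_pos ht hz) 2) (pow_pos hpos 2)]
  calc 1 * ((1 - t) + ‖1 - z‖) ^ 2 ≤ 1 * (3 * ‖1 - t * z‖) ^ 2 := by
        gcongr; exact one_sub_add_norm_one_sub_le ⟨ht.1, ht.2.le⟩ hz
    _ = 9 * ‖1 - t * z‖ ^ 2 := by ring

theorem setLIntegral_div_sq_le_one {δ : ℝ} (hδ : 0 ≤ δ) :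
    ∫⁻ t in Ico (0 : ℝ) 1, ENNReal.ofReal (δ / ((1 - t) + δ) ^ 2) ≤ 1 := by
  rcases hδ.eq_or_lt with rfl | hδ
  · simp
  have hderiv : ∀ t ∈ Icc (0 : ℝ) 1,
      HasDerivAt (fun t ↦ δ / ((1 - t) + δ)) (δ / ((1 - t) + δ) ^ 2) t := by
    intro t ht
    have hne : (1 - t) + δ ≠ 0 := by linarith [ht.2]
    simpa using (hasDerivAt_const t δ).fun_div (((hasDerivAt_id t).const_sub 1).add_const δ) hne
  rw [setLIntegral_ofReal_deriv_eq_sub zero_le_one hderiv fun t _ ↦ by positivity]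
  refine ENNReal.ofReal_le_one.2 ?_
  rw [sub_self, zero_add, div_self hδ.ne']
  exact sub_le_self _ (by positivity)

theorem IsRadialCarleson.setLIntegral_norm_one_sub_div_sq_le {ν : Measure ℝ} {C : ℝ≥0∞}
    (hν : IsRadialCarleson ν C) {z : ℂ} (hz : ‖z‖ ≤ 1) :
    ∫⁻ t in Ico 0 1, ENNReal.ofReal (‖1 - z‖ / ‖1 - t * z‖ ^ 2) ∂ν ≤ 9 * C := by
  set δ := ‖1 - z‖
  have hδ : 0 ≤ δ := norm_nonneg _
  have hmono : MonotoneOn (fun t ↦ δ / ((1 - t) + δ) ^ 2) (Ico 0 1) := by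
    intro a _ b hb hab
    have : 0 < (1 - b) + δ := add_pos_of_pos_of_nonneg (sub_pos.2 hb.2) hδ
    dsimp only
    gcongr
  calc ∫⁻ t in Ico 0 1, ENNReal.ofReal (δ / ‖1 - t * z‖ ^ 2) ∂ν
      ≤ ∫⁻ t in Ico 0 1, 9 * ENNReal.ofReal (δ / ((1 - t) + δ) ^ 2) ∂ν := by
        refine setLIntegral_mono' measurableSet_Ico fun t ht ↦ ?_
        rw [← ENNReal.ofReal_ofNat, ← ENNReal.ofReal_mul (by norm_num)]
        refine ENNReal.ofReal_le_ofReal ?_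
        calc δ / ‖1 - t * z‖ ^ 2 = δ * (1 / ‖1 - t * z‖ ^ 2) := by ring
          _ ≤ δ * (9 / ((1 - t) + δ) ^ 2) :=
            mul_le_mul_of_nonneg_left (one_div_norm_one_sub_mul_sq_le ht hz) hδ
          _ = 9 * (δ / ((1 - t) + δ) ^ 2) := by ring
    _ = 9 * ∫⁻ t in Ico 0 1, ENNReal.ofReal (δ / ((1 - t) + δ) ^ 2) ∂ν :=
        lintegral_const_mul _ (by fun_prop)
    _ ≤ 9 * (C * 1) := by
        gcongr
        refine (hν.setLIntegral_le_of_monotoneOn hmono fun t _ ↦ by positivity).trans ?_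
        gcongr
        exact setLIntegral_div_sq_le_one hδ
    _ = 9 * C := by rw [mul_one]

/-- Normalized arc length `dθ / 2π` on the unit circle, as a measure in the angle
`θ ∈ (0, 2π]`. -/
noncomputable def arcLength : Measure ℝ :=
  (ENNReal.ofReal (2 * Real.pi))⁻¹ • volume.restrict (Ioc 0 (2 * Real.pi))

instance : SFinite arcLength := by unfold arcLength; infer_instance

theorem hardyNorm_eq_iSup_lintegral_arcLength (f : ℂ → ℂ) :
    hardyNorm f = ⨆ r ∈ Ico (0 : ℝ) 1, ∫⁻ θ, ‖f (circleMap 0 r θ)‖ₑ ∂arcLength := by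
  simp only [hardyNorm, arcLength, circleMap, zero_add, ofReal_norm, lintegral_smul_measure,
    smul_eq_mul]

theorem enorm_circleAverage_le_lintegral_arcLength (g : ℂ → ℂ) :
    ‖Real.circleAverage g 0 1‖ₑ ≤ ∫⁻ θ, ‖g (circleMap 0 1 θ)‖ₑ ∂arcLength := by
  have hpi : 0 < 2 * Real.pi := Real.two_pi_pos
  rw [Real.circleAverage_def, enorm_smul, arcLength, lintegral_smul_measure, smul_eq_mul,
    intervalIntegral.integral_of_le hpi.le, enorm_inv hpi.ne', Real.enorm_of_nonneg hpi.le]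
  gcongr
  exact enorm_integral_le_lintegral_enorm _

theorem norm_sub_ofReal_of_norm_eq_one {ζ : ℂ} (hζ : ‖ζ‖ = 1) (t : ℝ) :
    ‖ζ - t‖ = ‖1 - t * ζ‖ := by
  have hconj : ζ * starRingEnd ℂ (ζ - t) = 1 - t * ζ := by
    rw [map_sub, mul_sub, Complex.mul_conj', hζ, Complex.conj_ofReal]
    push_cast
    ring
  rw [← hconj, norm_mul, hζ, one_mul, Complex.norm_conj]

theorem diffContOnCl_one_sub_div_one_sub_mul {t : ℝ} (ht : t ∈ Ico (0 : ℝ) 1) :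
    DiffContOnCl ℂ (fun z : ℂ ↦ (1 - z) / (1 - t * z)) (ball 0 1) := by
  refine DifferentiableOn.diffContOnCl (DifferentiableOn.div (by fun_prop) (by fun_prop) ?_)
  intro z hz
  rw [closure_ball _ one_ne_zero, mem_closedBall_zero_iff] at hz
  exact norm_pos_iff.1 (norm_one_sub_mul_pos ht hz)

-- The factor `1 - z` makes the kernel small at the point `1` where the Carleson measure
-- accumulates; at `z = t` it costs only `(1 - t) / (1 - t ^ 2) = 1 / (1 + t) ≥ 1 / 2`.
theorem circleAverage_kernel_mul {g : ℂ → ℂ} (hg : DiffContOnCl ℂ g (ball 0 1)) {t : ℝ}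
    (ht : t ∈ Ico (0 : ℝ) 1) :
    Real.circleAverage (fun z ↦ z / (z - t) * ((1 - z) / (1 - t * z) * g z)) 0 1 =
      g t / (1 + t) := by
  have ht_mem : (t : ℂ) ∈ ball (0 : ℂ) |1| := by
    simpa [abs_of_nonneg ht.1] using ht.2
  have hcauchy := DiffContOnCl.circleAverage_smul_div (c := 0) (R := 1)
    (by simpa using (diffContOnCl_one_sub_div_one_sub_mul ht).smul hg) ht_mem
  have h₁ : (1 - t : ℂ) ≠ 0 := by exact_mod_cast (sub_pos.2 ht.2).ne'
  have h₂ : (1 + t : ℂ) ≠ 0 := by exact_mod_cast (add_pos_of_pos_of_nonneg one_pos ht.1).ne'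
  simp only [sub_zero, smul_eq_mul] at hcauchy
  rw [hcauchy, show (1 - t * t : ℂ) = (1 - t) * (1 + t) by ring]
  field_simp

theorem enorm_le_lintegral_arcLength_mul_kernel {g : ℂ → ℂ} (hg : DiffContOnCl ℂ g (ball 0 1))
    {t : ℝ} (ht : t ∈ Ico (0 : ℝ) 1) :
    ‖g t‖ₑ ≤ 2 * ∫⁻ θ, ‖g (circleMap 0 1 θ)‖ₑ *
      ENNReal.ofReal (‖1 - circleMap 0 1 θ‖ / ‖1 - t * circleMap 0 1 θ‖ ^ 2) ∂arcLength := by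
  have hone : ‖(1 + t : ℂ)‖ₑ ≤ 2 := by
    rw [← ofReal_norm, ← Complex.ofReal_one, ← Complex.ofReal_add,
      Complex.norm_of_nonneg (by linarith [ht.1]), ← ENNReal.ofReal_ofNat]
    exact ENNReal.ofReal_le_ofReal (by linarith [ht.2])
  have hne : (1 + t : ℂ) ≠ 0 := by exact_mod_cast (add_pos_of_pos_of_nonneg one_pos ht.1).ne'
  calc ‖g t‖ₑ = ‖(1 + t : ℂ)‖ₑ * ‖g t / (1 + t)‖ₑ := by
        rw [← enorm_mul, mul_div_cancel₀ _ hne]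
    _ ≤ 2 * ∫⁻ θ, ‖circleMap 0 1 θ / (circleMap 0 1 θ - t) *
          ((1 - circleMap 0 1 θ) / (1 - t * circleMap 0 1 θ) * g (circleMap 0 1 θ))‖ₑ
          ∂arcLength := by
        rw [← circleAverage_kernel_mul hg ht]
        gcongr
        exact enorm_circleAverage_le_lintegral_arcLength _
    _ = _ := by
        congr 1
        refine lintegral_congr fun θ ↦ ?_
        have hζ : ‖circleMap 0 1 θ‖ = 1 := by simp
        rw [← ofReal_norm, ← ofReal_norm, ← ENNReal.ofReal_mul (norm_nonneg _)]
        simp only [norm_mul, norm_div, hζ, norm_sub_ofReal_of_norm_eq_one hζ]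
        ring_nf

theorem IsRadialCarleson.setLIntegral_enorm_le_of_diffContOnCl {ν : Measure ℝ} [SFinite ν]
    {C : ℝ≥0∞} (hν : IsRadialCarleson ν C) {g : ℂ → ℂ} (hg : DiffContOnCl ℂ g (ball 0 1)) :
    ∫⁻ t in Ico 0 1, ‖g (t : ℝ)‖ₑ ∂ν ≤
      18 * C * ∫⁻ θ, ‖g (circleMap 0 1 θ)‖ₑ ∂arcLength := by
  have hg_meas : Measurable fun θ ↦ ‖g (circleMap 0 1 θ)‖ₑ := by
    refine (hg.continuousOn.comp_continuous (continuous_circleMap 0 1) fun θ ↦ ?_).enorm.measurable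
    rw [closure_ball _ one_ne_zero]
    exact circleMap_mem_closedBall 0 zero_le_one θ
  have hcircle (θ : ℝ) : ‖circleMap 0 1 θ‖ ≤ 1 := by simp
  let K : ℝ × ℝ → ℝ≥0∞ := fun p ↦
    ENNReal.ofReal (‖1 - circleMap 0 1 p.2‖ / ‖1 - p.1 * circleMap 0 1 p.2‖ ^ 2)
  have hK : Measurable K := by
    unfold K circleMap
    fun_prop
  calc ∫⁻ t in Ico 0 1, ‖g (t : ℝ)‖ₑ ∂ν
      ≤ ∫⁻ t in Ico 0 1, 2 * ∫⁻ θ, ‖g (circleMap 0 1 θ)‖ₑ * K (t, θ) ∂arcLength ∂ν :=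
        setLIntegral_mono' measurableSet_Ico fun t ht ↦
          enorm_le_lintegral_arcLength_mul_kernel hg ht
    _ = 2 * ∫⁻ t in Ico 0 1, ∫⁻ θ, ‖g (circleMap 0 1 θ)‖ₑ * K (t, θ) ∂arcLength ∂ν :=
        lintegral_const_mul' _ _ ENNReal.ofNat_ne_top
    _ = 2 * ∫⁻ θ, (∫⁻ t in Ico 0 1, ‖g (circleMap 0 1 θ)‖ₑ * K (t, θ) ∂ν) ∂arcLength := by
        rw [lintegral_lintegral_swap ((hg_meas.comp measurable_snd).mul hK).aemeasurable]
    _ ≤ 2 * ∫⁻ θ, ‖g (circleMap 0 1 θ)‖ₑ * (9 * C) ∂arcLength := by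
        gcongr with θ
        rw [lintegral_const_mul' _ _ enorm_ne_top]
        exact mul_le_mul_right (hν.setLIntegral_norm_one_sub_div_sq_le (hcircle θ)) _
    _ = 18 * C * ∫⁻ θ, ‖g (circleMap 0 1 θ)‖ₑ ∂arcLength := by
        rw [lintegral_mul_const _ hg_meas]
        ring

theorem IsRadialCarleson.setLIntegral_enorm_dilation_le {ν : Measure ℝ} [SFinite ν] {C : ℝ≥0∞}
    (hν : IsRadialCarleson ν C) {f : ℂ → ℂ} (hf : DifferentiableOn ℂ f (ball 0 1)) {r : ℝ}
    (hr : r ∈ Ico (0 : ℝ) 1) :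
    ∫⁻ t in Ico 0 1, ‖f (r * (t : ℝ))‖ₑ ∂ν ≤ 18 * C * hardyNorm f := by
  have hdil : DiffContOnCl ℂ (fun z ↦ f (r * z)) (ball 0 1) := by
    refine DifferentiableOn.diffContOnCl (hf.comp (by fun_prop) fun z hz ↦ ?_)
    rw [closure_ball _ one_ne_zero, mem_closedBall_zero_iff] at hz
    rw [mem_ball_zero_iff, norm_mul, Complex.norm_of_nonneg hr.1]
    exact (mul_le_of_le_one_right hr.1 hz).trans_lt hr.2
  refine (hν.setLIntegral_enorm_le_of_diffContOnCl hdil).trans ?_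
  rw [hardyNorm_eq_iSup_lintegral_arcLength]
  gcongr
  refine le_iSup₂_of_le r hr (le_of_eq ?_)
  simp only [circleMap, zero_add, Complex.ofReal_one, one_mul]

theorem continuousOn_comp_mul_ofReal {f : ℂ → ℂ} (hf : DifferentiableOn ℂ f (ball 0 1)) {r : ℝ}
    (hr : r ∈ Icc (0 : ℝ) 1) : ContinuousOn (fun t : ℝ ↦ f (r * t)) (Ico 0 1) := by
  refine hf.continuousOn.comp (by fun_prop) fun t ht ↦ ?_
  rw [mem_ball_zero_iff, norm_mul, Complex.norm_of_nonneg hr.1, Complex.norm_of_nonneg ht.1]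
  exact (mul_le_of_le_one_left ht.1 hr.2).trans_lt ht.2

theorem IsRadialCarleson.setLIntegral_enorm_le_hardyNorm {ν : Measure ℝ} [SFinite ν] {C : ℝ≥0∞}
    (hν : IsRadialCarleson ν C) {f : ℂ → ℂ} (hf : DifferentiableOn ℂ f (ball 0 1)) :
    ∫⁻ t in Ico 0 1, ‖f (t : ℝ)‖ₑ ∂ν ≤ 18 * C * hardyNorm f := by
  obtain ⟨r, -, hr, hr_lim⟩ := exists_seq_strictMono_tendsto' (zero_lt_one' ℝ)
  have hlim : ∀ t ∈ Ico (0 : ℝ) 1,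
      Tendsto (fun n ↦ ‖f (r n * t)‖ₑ) atTop (nhds ‖f t‖ₑ) := by
    intro t ht
    have hcont : ContinuousAt f t := by
      refine (hf.differentiableAt (isOpen_ball.mem_nhds ?_)).continuousAt
      simpa [abs_of_nonneg ht.1] using ht.2
    have harg : Tendsto (fun n ↦ (r n : ℂ) * t) atTop (nhds t) := by
      simpa using ((Complex.continuous_ofReal.tendsto 1).comp hr_lim).mul_const (t : ℂ)
    exact (hcont.tendsto.comp harg).enorm
  calc ∫⁻ t in Ico 0 1, ‖f (t : ℝ)‖ₑ ∂ν
      = ∫⁻ t in Ico 0 1, liminf (fun n ↦ ‖f (r n * (t : ℝ))‖ₑ) atTop ∂ν :=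
        setLIntegral_congr_fun measurableSet_Ico fun t ht ↦ (hlim t ht).liminf_eq.symm
    _ ≤ liminf (fun n ↦ ∫⁻ t in Ico 0 1, ‖f (r n * (t : ℝ))‖ₑ ∂ν) atTop :=
        lintegral_liminf_le' fun n ↦ ((continuousOn_comp_mul_ofReal hf
          (Ioo_subset_Icc_self (hr n))).aestronglyMeasurable measurableSet_Ico).enorm
    _ ≤ liminf (fun _ : ℕ ↦ 18 * C * hardyNorm f) atTop :=
        liminf_le_liminf <| Eventually.of_forall fun n ↦
          hν.setLIntegral_enorm_dilation_le hf (Ioo_subset_Ico_self (hr n))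
    _ = 18 * C * hardyNorm f := liminf_const _

instance : SFinite dA := by unfold dA; infer_instance

theorem lintegral_comp_norm_dA {φ : ℝ → ℝ≥0∞} (hφ : Measurable φ) :
    ∫⁻ z, φ ‖z‖ ∂dA = 2 * ∫⁻ r in Ioi 0, ENNReal.ofReal r * φ r := by
  have hpi : ENNReal.ofReal Real.pi ≠ 0 := (ENNReal.ofReal_pos.2 Real.pi_pos).ne'
  have hpolar : ∫⁻ z : ℂ, φ ‖z‖ =
      ENNReal.ofReal (2 * Real.pi) * ∫⁻ r in Ioi 0, ENNReal.ofReal r * φ r :=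
    calc ∫⁻ z : ℂ, φ ‖z‖
        = ∫⁻ p in Ioi (0 : ℝ) ×ˢ Ioo (-Real.pi) Real.pi, ENNReal.ofReal p.1 * φ p.1 := by
          rw [← Complex.lintegral_comp_polarCoord_symm, polarCoord_target]
          refine setLIntegral_congr_fun (measurableSet_Ioi.prod measurableSet_Ioo) fun p hp ↦ ?_
          simp only [Complex.norm_polarCoord_symm, abs_of_pos (mem_Ioi.1 hp.1), smul_eq_mul]
      _ = ∫⁻ r in Ioi 0, ∫⁻ _ in Ioo (-Real.pi) Real.pi, ENNReal.ofReal r * φ r := by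
          rw [Measure.volume_eq_prod, ← Measure.prod_restrict, lintegral_prod _ (by fun_prop)]
      _ = ENNReal.ofReal (2 * Real.pi) * ∫⁻ r in Ioi 0, ENNReal.ofReal r * φ r := by
          simp only [setLIntegral_const, Real.volume_Ioo, sub_neg_eq_add, ← two_mul]
          rw [lintegral_mul_const _ (by fun_prop), mul_comm]
  rw [dA, lintegral_smul_measure, hpolar, smul_eq_mul, ENNReal.ofReal_mul zero_le_two,
    ENNReal.ofReal_ofNat, mul_comm 2, ← mul_assoc, ← mul_assoc,
    ENNReal.inv_mul_cancel hpi ENNReal.ofReal_ne_top, one_mul]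

theorem setLIntegral_ball_comp_norm_sub_dA {φ : ℝ → ℝ≥0∞} (hφ : Measurable φ) (c : ℂ) (R : ℝ) :
    ∫⁻ z in ball c R, φ ‖c - z‖ ∂dA = 2 * ∫⁻ r in Ioo 0 R, ENNReal.ofReal r * φ r := by
  have hball : (ball c R).indicator (fun z ↦ φ ‖c - z‖) =
      fun z ↦ (Iio R).indicator φ ‖c - z‖ := by
    ext z
    simp only [indicator, mem_ball, dist_eq_norm_sub', mem_Iio]
  have hradial : (fun r ↦ ENNReal.ofReal r * (Iio R).indicator φ r) =
      (Iio R).indicator fun r ↦ ENNReal.ofReal r * φ r := by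
    ext r
    simp only [indicator_apply, mul_ite, mul_zero]
  have htranslate : ∫⁻ z, (Iio R).indicator φ ‖c - z‖ ∂dA = ∫⁻ z, (Iio R).indicator φ ‖z‖ ∂dA := by
    simp only [dA, lintegral_smul_measure]
    rw [lintegral_sub_left_eq_self (fun z ↦ (Iio R).indicator φ ‖z‖)]
  rw [← lintegral_indicator measurableSet_ball, hball, htranslate,
    lintegral_comp_norm_dA (hφ.indicator measurableSet_Iio), hradial,
    lintegral_indicator measurableSet_Iio, Measure.restrict_restrict measurableSet_Iio,
    inter_comm, Ioi_inter_Iio]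

theorem setLIntegral_one_div_add {a b : ℝ} (ha : 0 < a) (hb : 0 ≤ b) :
    ∫⁻ r in Ico 0 b, ENNReal.ofReal (1 / (a + r)) = ENNReal.ofReal (Real.log ((a + b) / a)) := by
  have hpos : ∀ r ∈ Icc 0 b, 0 < a + r := fun r hr ↦ add_pos_of_pos_of_nonneg ha hr.1
  have hderiv : ∀ r ∈ Icc 0 b, HasDerivAt (fun r ↦ Real.log (a + r)) (1 / (a + r)) r :=
    fun r hr ↦ ((hasDerivAt_id r).const_add a).log (hpos r hr).ne'
  rw [setLIntegral_ofReal_deriv_eq_sub hb hderiv fun r hr ↦ (one_div_pos.2 (hpos r hr)).le,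
    add_zero, Real.log_div (by positivity) ha.ne']

theorem log_one_sub_add_two_div_le {t : ℝ} (ht : t ∈ Ico (0 : ℝ) 1) :
    Real.log (((1 - t) + 2) / (1 - t)) ≤ 2 * logWeight t := by
  have ht' : 0 < 1 - t := sub_pos.2 ht.2
  rw [logWeight, ← Real.log_rpow (by positivity), Real.rpow_two]
  gcongr
  rw [div_pow, div_le_div_iff₀ ht' (by positivity)]
  nlinarith [ht.1]

theorem setLIntegral_one_div_norm_one_sub_mul_sq_le {t : ℝ} (ht : t ∈ Ico (0 : ℝ) 1) :
    ∫⁻ z in ball 0 1, ENNReal.ofReal (1 / ‖1 - t * z‖ ^ 2) ∂dA ≤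
      36 * ENNReal.ofReal (logWeight t) := by
  set s := 1 - t
  have hs : 0 < s := sub_pos.2 ht.2
  have hsub : ball (0 : ℂ) 1 ⊆ ball 1 2 := ball_subset_ball' (by norm_num)
  have hradial : ∀ r ∈ Ioo (0 : ℝ) 2, ENNReal.ofReal r * ENNReal.ofReal (9 / (s + r) ^ 2) ≤
      9 * ENNReal.ofReal (1 / (s + r)) := by
    intro r hr
    have hr₀ : 0 < r := hr.1
    rw [← ENNReal.ofReal_mul hr₀.le, ← ENNReal.ofReal_ofNat, ← ENNReal.ofReal_mul (by norm_num)]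
    refine ENNReal.ofReal_le_ofReal ?_
    calc r * (9 / (s + r) ^ 2) ≤ (s + r) * (9 / (s + r) ^ 2) := by gcongr; linarith
      _ = 9 * (1 / (s + r)) := by field_simp
  calc ∫⁻ z in ball 0 1, ENNReal.ofReal (1 / ‖1 - t * z‖ ^ 2) ∂dA
      ≤ ∫⁻ z in ball 0 1, ENNReal.ofReal (9 / (s + ‖1 - z‖) ^ 2) ∂dA :=
        setLIntegral_mono' measurableSet_ball fun z hz ↦ ENNReal.ofReal_le_ofReal
          (one_div_norm_one_sub_mul_sq_le ht (mem_ball_zero_iff.1 hz).le)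
    _ ≤ ∫⁻ z in ball 1 2, ENNReal.ofReal (9 / (s + ‖1 - z‖) ^ 2) ∂dA := lintegral_mono_set hsub
    _ = 2 * ∫⁻ r in Ioo 0 2, ENNReal.ofReal r * ENNReal.ofReal (9 / (s + r) ^ 2) :=
        setLIntegral_ball_comp_norm_sub_dA (φ := fun r ↦ ENNReal.ofReal (9 / (s + r) ^ 2))
          (by fun_prop) 1 2
    _ ≤ 2 * ∫⁻ r in Ioo 0 2, 9 * ENNReal.ofReal (1 / (s + r)) := by
        gcongr 2 * ?_
        exact setLIntegral_mono' measurableSet_Ioo hradial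
    _ = 18 * ENNReal.ofReal (Real.log ((s + 2) / s)) := by
        rw [setLIntegral_congr Ioo_ae_eq_Ico, lintegral_const_mul _ (by fun_prop),
          setLIntegral_one_div_add hs zero_le_two, ← mul_assoc]
        norm_num
    _ ≤ 18 * ENNReal.ofReal (2 * logWeight t) := by
        gcongr
        exact log_one_sub_add_two_div_le ht
    _ = 36 * ENNReal.ofReal (logWeight t) := by
        rw [ENNReal.ofReal_mul zero_le_two, ENNReal.ofReal_ofNat, ← mul_assoc]
        norm_num

theorem one_sub_norm_le_norm_one_sub_mul {t : ℝ} (ht : |t| ≤ 1) (z : ℂ) :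
    1 - ‖z‖ ≤ ‖1 - t * z‖ :=
  calc 1 - ‖z‖ ≤ ‖(1 : ℂ)‖ - ‖t * z‖ := by
        rw [norm_one, norm_mul, Complex.norm_real]
        gcongr
        exact mul_le_of_le_one_left (norm_nonneg z) ht
    _ ≤ ‖1 - t * z‖ := norm_sub_norm_le _ _

theorem hasDerivAt_div_one_sub_mul (a : ℂ) {b z : ℂ} (h : 1 - b * z ≠ 0) :
    HasDerivAt (fun w ↦ a / (1 - b * w)) (a * b / (1 - b * z) ^ 2) z := by
  have hden : HasDerivAt (fun w ↦ 1 - b * w) (-b) z := by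
    simpa using ((hasDerivAt_id z).const_mul b).const_sub 1
  simpa using (hasDerivAt_const z a).fun_div hden h

theorem integrable_div_one_sub_mul {μ : Measure ℝ} (hμ : ∀ᵐ t ∂μ, |t| ≤ 1) {f : ℂ → ℂ}
    (hf : Integrable (fun t : ℝ ↦ f t) μ) {z : ℂ} (hz : ‖z‖ < 1) :
    Integrable (fun t : ℝ ↦ f t / (1 - t * z)) μ := by
  simp only [div_eq_mul_inv]
  refine hf.mul_bdd (c := (1 - ‖z‖)⁻¹) (Measurable.aestronglyMeasurable (by fun_prop)) ?_
  filter_upwards [hμ] with t ht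
  rw [norm_inv]
  exact inv_anti₀ (sub_pos.2 hz) (one_sub_norm_le_norm_one_sub_mul ht z)

theorem norm_mul_div_one_sub_mul_sq_le {t : ℝ} (ht : |t| ≤ 1) (a z : ℂ) :
    ‖a * t / (1 - t * z) ^ 2‖ ≤ ‖a‖ * (1 / ‖1 - t * z‖ ^ 2) := by
  rw [norm_div, norm_mul, norm_pow, Complex.norm_real, mul_one_div]
  gcongr
  exact mul_le_of_le_one_right (norm_nonneg a) ht

theorem hasDerivAt_Imu {μ : Measure ℝ} (hμ : ∀ᵐ t ∂μ, |t| ≤ 1) {f : ℂ → ℂ}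
    (hf : Integrable (fun t : ℝ ↦ f t) μ) {z : ℂ} (hz : ‖z‖ < 1) :
    HasDerivAt (Imu μ f) (∫ t : ℝ, f t * t / (1 - t * z) ^ 2 ∂μ) z := by
  obtain ⟨ρ, hzρ, hρ⟩ := exists_between hz
  have hlow : ∀ t : ℝ, |t| ≤ 1 → ∀ w ∈ ball (0 : ℂ) ρ, 1 - ρ ≤ ‖1 - t * w‖ := fun t ht w hw ↦
    (sub_le_sub_left (mem_ball_zero_iff.1 hw).le 1).trans (one_sub_norm_le_norm_one_sub_mul ht w)
  have hmeas : ∀ w : ℂ, AEStronglyMeasurable (fun t : ℝ ↦ f t / (1 - t * w)) μ := fun w ↦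
    hf.aestronglyMeasurable.div₀ (Measurable.aestronglyMeasurable (by fun_prop))
  have hmeas' : AEStronglyMeasurable (fun t : ℝ ↦ f t * t / (1 - t * z) ^ 2) μ :=
    (hf.aestronglyMeasurable.mul (Measurable.aestronglyMeasurable (by fun_prop))).div₀
      (Measurable.aestronglyMeasurable (by fun_prop))
  refine (hasDerivAt_integral_of_dominated_loc_of_deriv_le (μ := μ)
    (F := fun z (t : ℝ) ↦ f t / (1 - t * z)) (F' := fun z (t : ℝ) ↦ f t * t / (1 - t * z) ^ 2)
    (bound := fun t ↦ ‖f t‖ * (1 / (1 - ρ) ^ 2)) (isOpen_ball.mem_nhds (mem_ball_zero_iff.2 hzρ))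
    (Eventually.of_forall hmeas) (integrable_div_one_sub_mul hμ hf hz) hmeas' ?_
    (hf.norm.mul_const _) ?_).2
  · filter_upwards [hμ] with t ht w hw
    have := hlow t ht w hw
    have : 0 < 1 - ρ := sub_pos.2 hρ
    refine (norm_mul_div_one_sub_mul_sq_le ht (f t) w).trans ?_
    gcongr
  · filter_upwards [hμ] with t ht w hw
    exact hasDerivAt_div_one_sub_mul (f t)
      (norm_pos_iff.1 ((sub_pos.2 hρ).trans_le (hlow t ht w hw)))

theorem enorm_deriv_Imu_le {μ : Measure ℝ} (hμ : ∀ᵐ t ∂μ, |t| ≤ 1) {f : ℂ → ℂ}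
    (hf : Integrable (fun t : ℝ ↦ f t) μ) {z : ℂ} (hz : ‖z‖ < 1) :
    ‖deriv (Imu μ f) z‖ₑ ≤
      ∫⁻ t : ℝ, ‖f t‖ₑ * ENNReal.ofReal (1 / ‖1 - t * z‖ ^ 2) ∂μ := by
  rw [(hasDerivAt_Imu hμ hf hz).deriv]
  refine (enorm_integral_le_lintegral_enorm _).trans (lintegral_mono_ae ?_)
  filter_upwards [hμ] with t ht
  rw [← ofReal_norm, ← ofReal_norm, ← ENNReal.ofReal_mul (norm_nonneg _)]
  exact ENNReal.ofReal_le_ofReal (norm_mul_div_one_sub_mul_sq_le ht (f t) z)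

theorem enorm_Imu_zero_le (μ : Measure ℝ) (f : ℂ → ℂ) :
    ‖Imu μ f 0‖ₑ ≤ ∫⁻ t : ℝ, ‖f t‖ₑ ∂μ := by
  simpa only [Imu, mul_zero, sub_zero, div_one] using
    enorm_integral_le_lintegral_enorm fun t : ℝ ↦ f t

theorem dirichletNorm_one_zero (g : ℂ → ℂ) :
    dirichletNorm 1 0 g = ‖g 0‖ₑ + ∫⁻ z in ball 0 1, ‖deriv g z‖ₑ ∂dA := by
  simp [dirichletNorm, bergmanNorm]

theorem setLIntegral_enorm_deriv_Imu_le {μ : Measure ℝ} [SFinite μ]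
    (hμ : ∀ᵐ t ∂μ, t ∈ Ico (0 : ℝ) 1) {f : ℂ → ℂ} (hf : Integrable (fun t : ℝ ↦ f t) μ) :
    ∫⁻ z in ball 0 1, ‖deriv (Imu μ f) z‖ₑ ∂dA ≤
      36 * ∫⁻ t : ℝ, ‖f t‖ₑ ∂logWeighted μ := by
  have habs : ∀ᵐ t ∂μ, |t| ≤ 1 := hμ.mono fun t ht ↦ (abs_of_nonneg ht.1).trans_le ht.2.le
  have hmeas : AEMeasurable
      (fun p : ℂ × ℝ ↦ ‖f p.2‖ₑ * ENNReal.ofReal (1 / ‖1 - p.2 * p.1‖ ^ 2))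
      ((dA.restrict (ball 0 1)).prod μ) :=
    hf.aestronglyMeasurable.enorm.comp_snd.mul (Measurable.aemeasurable (by fun_prop))
  calc ∫⁻ z in ball 0 1, ‖deriv (Imu μ f) z‖ₑ ∂dA
      ≤ ∫⁻ z in ball 0 1, ∫⁻ t : ℝ, ‖f t‖ₑ * ENNReal.ofReal (1 / ‖1 - t * z‖ ^ 2) ∂μ ∂dA :=
        setLIntegral_mono' measurableSet_ball fun z hz ↦
          enorm_deriv_Imu_le habs hf (mem_ball_zero_iff.1 hz)
    _ = ∫⁻ t : ℝ, ‖f t‖ₑ * (∫⁻ z in ball 0 1, ENNReal.ofReal (1 / ‖1 - t * z‖ ^ 2) ∂dA) ∂μ := by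
        rw [lintegral_lintegral_swap hmeas]
        exact lintegral_congr fun t ↦ lintegral_const_mul' _ _ enorm_ne_top
    _ ≤ ∫⁻ t : ℝ, 36 * (ENNReal.ofReal (logWeight t) * ‖f t‖ₑ) ∂μ := by
        refine lintegral_mono_ae (hμ.mono fun t ht ↦ ?_)
        calc _ ≤ ‖f t‖ₑ * (36 * ENNReal.ofReal (logWeight t)) := by
              gcongr; exact setLIntegral_one_div_norm_one_sub_mul_sq_le ht
          _ = 36 * (ENNReal.ofReal (logWeight t) * ‖f t‖ₑ) := by ring
    _ = 36 * ∫⁻ t : ℝ, ‖f t‖ₑ ∂logWeighted μ := by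
        rw [lintegral_const_mul' _ _ ENNReal.ofNat_ne_top, lintegral_logWeighted]

theorem lintegral_le_two_mul_lintegral_logWeighted {μ : Measure ℝ}
    (hμ : ∀ᵐ t ∂μ, t ∈ Ico (0 : ℝ) 1) (φ : ℝ → ℝ≥0∞) :
    ∫⁻ t, φ t ∂μ ≤ 2 * ∫⁻ t, φ t ∂logWeighted μ := by
  rw [lintegral_logWeighted, ← lintegral_const_mul' _ _ ENNReal.ofNat_ne_top]
  refine lintegral_mono_ae (hμ.mono fun t ht ↦ ?_)
  rw [← mul_assoc, ← ENNReal.ofReal_ofNat, ← ENNReal.ofReal_mul zero_le_two]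
  refine le_mul_of_one_le_left' (ENNReal.one_le_ofReal.2 ?_)
  linarith [half_le_logWeight ht]

theorem dirichletNorm_Imu_le {μ : Measure ℝ} [SFinite μ] (hμ : ∀ᵐ t ∂μ, t ∈ Ico (0 : ℝ) 1)
    {f : ℂ → ℂ} (hf : Integrable (fun t : ℝ ↦ f t) μ) :
    dirichletNorm 1 0 (Imu μ f) ≤
      38 * ∫⁻ t : ℝ, ‖f t‖ₑ ∂logWeighted μ := by
  set I := ∫⁻ t : ℝ, ‖f t‖ₑ ∂logWeighted μ
  calc dirichletNorm 1 0 (Imu μ f)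
      = ‖Imu μ f 0‖ₑ + ∫⁻ z in ball 0 1, ‖deriv (Imu μ f) z‖ₑ ∂dA := dirichletNorm_one_zero _
    _ ≤ 2 * I + 36 * I := by
        gcongr
        · exact (enorm_Imu_zero_le μ f).trans
            (lintegral_le_two_mul_lintegral_logWeighted hμ _)
        · exact setLIntegral_enorm_deriv_Imu_le hμ hf
    _ = 38 * I := by ring

theorem IsRadialLogCarleson.lintegral_logWeighted_le_hardyNorm {μ : Measure ℝ}
    [SFinite μ] {C : ℝ≥0∞} (hμC : IsRadialLogCarleson μ C) (hμ : ∀ᵐ t ∂μ, t ∈ Ico (0 : ℝ) 1)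
    {f : ℂ → ℂ} (hf : DifferentiableOn ℂ f (ball 0 1)) :
    ∫⁻ t : ℝ, ‖f t‖ₑ ∂logWeighted μ ≤
      54 * C * hardyNorm f := by
  set ν := logWeighted μ
  have hν : ν.restrict (Ico 0 1) = ν :=
    Measure.restrict_eq_self_of_ae_mem (withDensity_absolutelyContinuous μ _ |>.ae_le hμ)
  calc ∫⁻ t : ℝ, ‖f t‖ₑ ∂ν = ∫⁻ t in Ico 0 1, ‖f (t : ℝ)‖ₑ ∂ν := by rw [hν]
    _ ≤ 18 * (3 * C) * hardyNorm f :=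
        hμC.isRadialCarleson_logWeighted.setLIntegral_enorm_le_hardyNorm hf
    _ = 54 * C * hardyNorm f := by ring

theorem IsRadialLogCarleson.integrable_of_hardyNorm_lt_top {μ : Measure ℝ} [SFinite μ] {C : ℝ≥0∞}
    (hC : C ≠ ∞) (hμC : IsRadialLogCarleson μ C) (hμ : ∀ᵐ t ∂μ, t ∈ Ico (0 : ℝ) 1)
    {f : ℂ → ℂ} (hf : DifferentiableOn ℂ f (ball 0 1)) (hfin : hardyNorm f < ∞) :
    Integrable (fun t : ℝ ↦ f t) μ := by
  refine ⟨?_, ?_⟩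
  · have hcont : ContinuousOn (fun t : ℝ ↦ f t) (Ico 0 1) := by
      simpa using continuousOn_comp_mul_ofReal hf (right_mem_Icc.2 zero_le_one)
    rw [← Measure.restrict_eq_self_of_ae_mem hμ]
    exact hcont.aestronglyMeasurable measurableSet_Ico
  · calc ∫⁻ t : ℝ, ‖f t‖ₑ ∂μ
        ≤ 2 * ∫⁻ t : ℝ, ‖f t‖ₑ ∂logWeighted μ :=
          lintegral_le_two_mul_lintegral_logWeighted hμ _
      _ ≤ 2 * (54 * C * hardyNorm f) := by
          gcongr
          exact hμC.lintegral_logWeighted_le_hardyNorm hμ hf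
      _ < ∞ := by finiteness

theorem isRadialLogCarleson_ofReal {μ : Measure ℝ} [IsFiniteMeasure μ] {C : ℝ}
    (hμ : ∀ t ∈ Ico (0 : ℝ) 1, (μ (Ico t 1)).toReal * Real.log (2 / (1 - t)) ≤ C * (1 - t)) :
    IsRadialLogCarleson μ (ENNReal.ofReal C) := by
  intro t ht
  rw [← ENNReal.ofReal_toReal (measure_ne_top μ (Ico t 1)),
    ← ENNReal.ofReal_mul ENNReal.toReal_nonneg, ← ENNReal.ofReal_mul' (sub_nonneg.2 ht.2.le)]
  exact ENNReal.ofReal_le_ofReal (hμ t ht)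

/-- If `μ` is a finite positive Borel measure on `[0,1)` which is a
`1`-logarithmic `1`-Carleson measure, then there is `C > 0` such that for every `f ∈ H¹`:
the integral defining `I_μ f(z)` converges absolutely for every `z ∈ 𝔻`, the function
`I_μ f` is analytic in `𝔻`, and `‖I_μ f‖_{𝒟¹₀} ≤ C ‖f‖_{H¹}`. -/
theorem hmu_H1_to_D10 (μ : Measure ℝ) [IsFiniteMeasure μ]
    (hsupp : μ (Ico (0 : ℝ) 1)ᶜ = 0)
    (hμ : ∃ C > 0, ∀ t ∈ Ico (0 : ℝ) 1,
      (μ (Ico t 1)).toReal * Real.log (2 / (1 - t)) ≤ C * (1 - t)) :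
    ∃ C > 0, ∀ f : ℂ → ℂ, DifferentiableOn ℂ f (ball (0 : ℂ) 1) → hardyNorm f < ⊤ →
      (∀ z ∈ ball (0 : ℂ) 1, Integrable (fun t : ℝ => f (t : ℂ) / (1 - (t : ℂ) * z)) μ) ∧
      DifferentiableOn ℂ (Imu μ f) (ball (0 : ℂ) 1) ∧
      dirichletNorm 1 0 (Imu μ f) ≤ ENNReal.ofReal C * hardyNorm f := by
  obtain ⟨C, hC, hμ⟩ := hμ
  have hcarleson : IsRadialLogCarleson μ (ENNReal.ofReal C) := isRadialLogCarleson_ofReal hμ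
  have hmem : ∀ᵐ t ∂μ, t ∈ Ico (0 : ℝ) 1 := mem_ae_iff.2 hsupp
  have habs : ∀ᵐ t ∂μ, |t| ≤ 1 := hmem.mono fun t ht ↦ (abs_of_nonneg ht.1).trans_le ht.2.le
  refine ⟨2052 * C, by positivity, fun f hf hfin ↦ ?_⟩
  have hint : Integrable (fun t : ℝ ↦ f t) μ :=
    hcarleson.integrable_of_hardyNorm_lt_top ENNReal.ofReal_ne_top hmem hf hfin
  refine ⟨fun z hz ↦ integrable_div_one_sub_mul habs hint (mem_ball_zero_iff.1 hz),
    fun z hz ↦ (hasDerivAt_Imu habs hint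
      (mem_ball_zero_iff.1 hz)).differentiableAt.differentiableWithinAt, ?_⟩
  calc dirichletNorm 1 0 (Imu μ f)
      ≤ 38 * ∫⁻ t : ℝ, ‖f t‖ₑ ∂logWeighted μ :=
        dirichletNorm_Imu_le hmem hint
    _ ≤ 38 * (54 * ENNReal.ofReal C * hardyNorm f) := by
        gcongr
        exact hcarleson.lintegral_logWeighted_le_hardyNorm hmem hf
    _ = ENNReal.ofReal (2052 * C) * hardyNorm f := by
        rw [ENNReal.ofReal_mul (by norm_num), ENNReal.ofReal_ofNat]
        ring
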